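/- Let n ≥ 2 and fix d ∈ {1,…,n−1}. Let X = L·R where R ∈ 𝓑^{>0} and L = T₁(u)·T₂(u)⋯T_d(u) for a triangular array u with u_j^{i+j−1} > 0 for all 1 ≤ i ≤ d, 1 ≤ j ≤ n−i, and u_j^{i+j−1} = 0 for all i > d (so that L is d-banded: L_{k,l} = 0 whenever k − l > d). Then X⁺ := R·L admits an LU factorization X⁺ = L⁺·R⁺ with R⁺ ∈ 𝓑^{>0} and L⁺ = T₁(u⁺)·T₂(u⁺)⋯T_d(u⁺) for a triangular array u⁺ with u⁺_j^{i+j−1} > 0 for 1 ≤ i ≤ d, 1 ≤ j ≤ n−i, and u⁺_j^{i+j−1} = 0 for i > d. Hence the d-band-limited totally positive Hessenberg matrices form an invariant set of the discrete full Kostant–Toda map. -/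

import Mathlib

/-!
The map is computed by pushing the bidiagonal factor `R` through the elementary factors of `L` one
at a time. If `R` has diagonal `r` (and ones above it), then
`R * ℓ(a) = ℓ(a') * R'`, where `ℓ` inserts at `(k+1, k)`, `a' = a r_{k+1} / (r_k + a)`, and `R'`
differs from `R` only in the diagonal entries `r_k' = r_k + a`, `r_{k+1}' = r_k r_{k+1} / (r_k + a)`.
All these formulas are subtraction free, so positivity is preserved (`exchange_elemL`). The order
and positions of the elementary factors do not change, so iterating over the factors of each `T_i`,
and then over `T_1, …, T_d` (both by `exchange_prod`), gives the new array and the new `R'`.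
-/

open Matrix

/-- `ℓ_{k+1}(a)` (paper's 1-indexed `ℓ_i` with `i = k+1`): the identity matrix with
the entry `a` inserted in (0-indexed) position `(k+1, k)`. -/
def elemL (n : ℕ) (k : ℕ) (a : ℝ) : Matrix (Fin n) (Fin n) ℝ :=
  fun p q => (if p = q then 1 else 0) + (if (p : ℕ) = k + 1 ∧ (q : ℕ) = k then a else 0)

/-- `T_i(u) = ℓ₁(u_1^i)·ℓ₂(u_2^{i+1})⋯ℓ_{n−i}(u_{n−i}^{n−1})`. -/
def Tmat (n : ℕ) (u : ℕ → ℕ → ℝ) (i : ℕ) : Matrix (Fin n) (Fin n) ℝ :=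
  ((List.range (n - i)).map (fun j => elemL n j (u (j + 1) (i + j)))).prod

/-- Upper bidiagonal matrices with ones on the superdiagonal (the set `𝓑`). -/
def IsUpperBidiagOne {n : ℕ} (M : Matrix (Fin n) (Fin n) ℝ) : Prop :=
  (∀ p q : Fin n, (p : ℕ) + 1 = (q : ℕ) → M p q = 1) ∧
  (∀ p q : Fin n, (p : ℕ) ≠ (q : ℕ) → (p : ℕ) + 1 ≠ (q : ℕ) → M p q = 0)

/-- Members of `𝓑^{>0}`. -/
def IsBpos {n : ℕ} (M : Matrix (Fin n) (Fin n) ℝ) : Prop :=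
  IsUpperBidiagOne M ∧ ∀ p : Fin n, 0 < M p p

/-- A `d`-band-limited positive triangular array: writing the paper's parameters as
`u_j^{i+j−1}` (value `u j m` with `m = i+j−1`), the entries with `1 ≤ i ≤ d` are
positive and those with `i > d` (or outside the triangle) vanish. -/
def BandTriangle (n d : ℕ) (u : ℕ → ℕ → ℝ) : Prop :=
  (∀ j m, 1 ≤ j → j ≤ m → m ≤ n - 1 → m < j + d → 0 < u j m) ∧
  (∀ j m, (¬(1 ≤ j ∧ j ≤ m ∧ m ≤ n - 1) ∨ j + d ≤ m) → u j m = 0)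

/-- If `R` can be moved past each factor of a product, changing the factor's parameter and `R`
within the admissible sets `good i` and `P`, then `R` can be moved past the whole product. -/
lemma exchange_prod {M β : Type*} [Monoid M] (P : M → Prop) (G : ℕ → β → M) (good : ℕ → β → Prop)
    (m : ℕ)
    (h : ∀ i < m, ∀ b, good i b → ∀ R, P R →
      ∃ b', good i b' ∧ ∃ R', P R' ∧ R * G i b = G i b' * R')
    (f : ℕ → β) (hf : ∀ i < m, good i (f i)) (R : M) (hR : P R) :
    ∃ f' : ℕ → β, (∀ i < m, good i (f' i)) ∧ ∃ R', P R' ∧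
      R * ((List.range m).map (fun i => G i (f i))).prod =
        ((List.range m).map (fun i => G i (f' i))).prod * R' := by
  induction m with
  | zero => exact ⟨f, by simp, R, hR, by simp⟩
  | succ m ih =>
    obtain ⟨f', hf', R', hR', e⟩ :=
      ih (fun i hi => h i (by omega)) (fun i hi => hf i (by omega))
    obtain ⟨b, hb, R'', hR'', e'⟩ := h m (by omega) (f m) (hf m (by omega)) R' hR'
    have hmap : (List.range m).map (fun i => G i (Function.update f' m b i)) =
        (List.range m).map (fun i => G i (f' i)) := by
      apply List.map_congr_left
      intro i hi
      rw [Function.update_of_ne (List.mem_range.mp hi).ne]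
    refine ⟨Function.update f' m b, ?_, R'', hR'', ?_⟩
    · intro i hi
      rcases eq_or_ne i m with rfl | hne
      · simpa using hb
      · rw [Function.update_of_ne hne]
        exact hf' i (by omega)
    · simp only [List.range_succ, List.map_append, List.prod_append, hmap, List.map_cons,
        List.map_nil, List.prod_cons, List.prod_nil, mul_one, Function.update_self]
      rw [← mul_assoc, e, mul_assoc, e', mul_assoc]

lemma mul_elemL_apply {n k : ℕ} (hk : k + 1 < n) (a : ℝ) (R : Matrix (Fin n) (Fin n) ℝ)
    (p q : Fin n) :
    (R * elemL n k a) p q = R p q + if (q : ℕ) = k then R p ⟨k + 1, hk⟩ * a else 0 := by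
  have h : ∀ x : Fin n, (x : ℕ) = k + 1 ↔ x = ⟨k + 1, hk⟩ := fun x => by simp [Fin.ext_iff]
  simp only [Matrix.mul_apply, elemL, mul_add, Finset.sum_add_distrib, h]
  split_ifs with hq <;> simp [hq]

lemma elemL_mul_apply {n k : ℕ} (hk : k + 1 < n) (a : ℝ) (R : Matrix (Fin n) (Fin n) ℝ)
    (p q : Fin n) :
    (elemL n k a * R) p q =
      R p q + if (p : ℕ) = k + 1 then a * R ⟨k, by omega⟩ q else 0 := by
  have h : ∀ x : Fin n, (x : ℕ) = k ↔ x = ⟨k, by omega⟩ := fun x => by simp [Fin.ext_iff]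
  simp only [Matrix.mul_apply, elemL, add_mul, Finset.sum_add_distrib, h]
  split_ifs with hp <;> simp [hp]

/-- The elementary exchange relation between `𝓑^{>0}` and one factor `ℓ_{k+1}(a)`, `a > 0`. -/
lemma exchange_elemL {n k : ℕ} (hk : k + 1 < n) {a : ℝ} (ha : 0 < a)
    {R : Matrix (Fin n) (Fin n) ℝ} (hR : IsBpos R) :
    ∃ a', 0 < a' ∧ ∃ R', IsBpos R' ∧ R * elemL n k a = elemL n k a' * R' := by
  have hk' : k < n := by omega
  obtain ⟨⟨h1, h0⟩, hpos⟩ := hR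
  obtain ⟨x, hx⟩ : ∃ x, x = R ⟨k, hk'⟩ ⟨k, hk'⟩ := ⟨_, rfl⟩
  obtain ⟨y, hy⟩ : ∃ y, y = R ⟨k + 1, hk⟩ ⟨k + 1, hk⟩ := ⟨_, rfl⟩
  have hx0 : 0 < x := hx ▸ hpos _
  have hy0 : 0 < y := hy ▸ hpos _
  have hxa : x + a ≠ 0 := by positivity
  refine ⟨a * y / (x + a), by positivity, Matrix.of fun p q => if p = q then
    (if (p : ℕ) = k then x + a else if (p : ℕ) = k + 1 then x * y / (x + a) else R p p)
    else R p q, ⟨⟨?_, ?_⟩, ?_⟩, ?_⟩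
  · intro p q hpq
    have : p ≠ q := by rintro rfl; omega
    simpa [this] using h1 p q hpq
  · intro p q hpq hpq'
    have : p ≠ q := by rintro rfl; omega
    simpa [this] using h0 p q hpq hpq'
  · intro p
    simp only [Matrix.of_apply, if_true]
    split_ifs
    · positivity
    · positivity
    · exact hpos p
  · ext p q
    rw [mul_elemL_apply hk, elemL_mul_apply hk]
    simp only [Matrix.of_apply, Fin.ext_iff]
    by_cases hp : (p : ℕ) = k + 1
    · obtain rfl : p = ⟨k + 1, hk⟩ := Fin.ext hp
      by_cases hq : (q : ℕ) = k
      · obtain rfl : q = ⟨k, hk'⟩ := Fin.ext hq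
        simp [← hy]
        field_simp
      · by_cases hq' : (q : ℕ) = k + 1
        · obtain rfl : q = ⟨k + 1, hk⟩ := Fin.ext hq'
          simp [← hy, h1 ⟨k, hk'⟩ ⟨k + 1, hk⟩ rfl]
          field_simp
        · have := h0 ⟨k, hk'⟩ q (by simpa using Ne.symm hq) (by simpa using Ne.symm hq')
          simp [hq, Ne.symm hq, Ne.symm hq', this]
    · by_cases hp' : (p : ℕ) = k
      · obtain rfl : p = ⟨k, hk'⟩ := Fin.ext hp'
        by_cases hq : (q : ℕ) = k
        · obtain rfl : q = ⟨k, hk'⟩ := Fin.ext hq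
          simp [← hx, h1 ⟨k, hk'⟩ ⟨k + 1, hk⟩ rfl]
        · simp [hq, Ne.symm hq]
      · have := h0 p ⟨k + 1, hk⟩ (by simpa using hp) (by simpa using hp')
        by_cases hpq : (p : ℕ) = q
        · obtain rfl : p = q := Fin.ext hpq
          simp [hp, hp']
        · simp [hp, this, hpq]

/-- invariance of the `d`-band-limited totally positive Hessenberg
matrices under the discrete full Kostant–Toda map. -/
theorem statement11 (n : ℕ) (hn : 2 ≤ n) (d : ℕ) (hd1 : 1 ≤ d) (hd2 : d ≤ n - 1)
    (u : ℕ → ℕ → ℝ) (hu : BandTriangle n d u)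
    (R : Matrix (Fin n) (Fin n) ℝ) (hR : IsBpos R)
    (L : Matrix (Fin n) (Fin n) ℝ)
    (hL : L = ((List.range d).map (fun i => Tmat n u (i + 1))).prod) :
    ∃ (u' : ℕ → ℕ → ℝ) (R' : Matrix (Fin n) (Fin n) ℝ),
      BandTriangle n d u' ∧ IsBpos R' ∧
      R * L = (((List.range d).map (fun i => Tmat n u' (i + 1))).prod) * R' := by
  -- `v i j` is the parameter of the factor `j` of `T_{i+1}`, both indices counted from zero.
  obtain ⟨v, hv, R', hR', e⟩ := exchange_prod IsBpos
    (fun i (f : ℕ → ℝ) => ((List.range (n - (i + 1))).map (fun j => elemL n j (f j))).prod)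
    (fun i f => ∀ j < n - (i + 1), 0 < f j) d
    (fun i _ f hf S hS => exchange_prod IsBpos (fun j a => elemL n j a) (fun _ a => 0 < a)
      (n - (i + 1)) (fun j hj a ha S hS => exchange_elemL (by omega) ha hS) f hf S hS)
    (fun i j => u (j + 1) (i + 1 + j))
    (fun i hi j hj => hu.1 _ _ (by omega) (by omega) (by omega) (by omega)) R hR
  refine ⟨fun j m => if 1 ≤ j ∧ j ≤ m ∧ m ≤ n - 1 ∧ m < j + d then v (m - j) (j - 1) else 0,
    R', ⟨?_, ?_⟩, hR', ?_⟩
  · intro j m h1 h2 h3 h4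
    simp only [h1, h2, h3, h4, and_self, if_true]
    exact hv _ (by omega) _ (by omega)
  · intro j m h
    exact if_neg (by omega)
  · rw [hL]
    refine e.trans ?_
    congr 2
    apply List.map_congr_left
    intro i hi
    rw [List.mem_range] at hi
    unfold Tmat
    congr 1
    apply List.map_congr_left
    intro j hj
    rw [List.mem_range] at hj
    beta_reduce
    rw [if_pos (by omega)]
    congr 2
    omega
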